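/- Let c > 0 and let v : [0,∞) → (0,1) be nondecreasing. Assume that for almost every r > 0, v is differentiable at r with v'(r) ≥ c·I(v(r)). Then for all 0 ≤ ρ ≤ r, Φ⁻¹(v(r)) ≥ Φ⁻¹(v(ρ)) + c·(r-ρ); equivalently, v(r) ≥ Φ(Φ⁻¹(v(ρ)) + c·(r-ρ)). -/

import Mathlib

open Real MeasureTheory

/-- The standard Gaussian density. -/
noncomputable def gaussPdf (z : ℝ) : ℝ := (Real.sqrt (2 * Real.pi))⁻¹ * Real.exp (-z ^ 2 / 2)

/-- The standard normal CDF. -/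
noncomputable def Phi (r : ℝ) : ℝ := ∫ z in Set.Iic r, gaussPdf z

/-- The inverse of the standard normal CDF. -/
noncomputable def PhiInv : ℝ → ℝ := Function.invFun Phi

/-- The Gaussian isoperimetric profile `I = φ ∘ Φ⁻¹`. -/
noncomputable def gaussI (a : ℝ) : ℝ := gaussPdf (PhiInv a)

open Set Filter Topology ProbabilityTheory

lemma gaussPdf_eq : gaussPdf = gaussianPDFReal 0 1 := by
  funext z
  simp [gaussPdf, gaussianPDFReal]

lemma gaussPdf_pos (z : ℝ) : 0 < gaussPdf z := by
  rw [gaussPdf_eq]; exact gaussianPDFReal_pos _ _ _ one_ne_zero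

lemma gaussPdf_cont : Continuous gaussPdf := by
  unfold gaussPdf; fun_prop

lemma gaussPdf_int : Integrable gaussPdf := by
  rw [gaussPdf_eq]; exact integrable_gaussianPDFReal _ _

lemma Phi_eq_cdf (x : ℝ) : Phi x = cdf (gaussianReal 0 1) x := by
  rw [cdf_eq_real, measureReal_def, gaussianReal_apply_eq_integral _ one_ne_zero,
    ENNReal.toReal_ofReal]
  · rw [Phi, gaussPdf_eq]
  · exact integral_nonneg (gaussianPDFReal_nonneg _ _)

lemma Phi_deriv (x : ℝ) : HasDerivAt Phi (gaussPdf x) x := by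
  have h : Phi = fun u => Phi 0 + ∫ z in (0:ℝ)..u, gaussPdf z := by
    funext u
    rw [← intervalIntegral.integral_Iic_sub_Iic gaussPdf_int.integrableOn
      gaussPdf_int.integrableOn]
    simp [Phi]
  rw [h]
  exact (intervalIntegral.integral_hasDerivAt_right (gaussPdf_cont.intervalIntegrable _ _)
    (gaussPdf_cont.stronglyMeasurableAtFilter _ _) gaussPdf_cont.continuousAt).const_add _

lemma Phi_strictMono : StrictMono Phi :=
  strictMono_of_hasDerivAt_pos Phi_deriv gaussPdf_pos

lemma Phi_cont : Continuous Phi :=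
  continuous_iff_continuousAt.2 fun x => (Phi_deriv x).continuousAt

lemma Phi_mem (x : ℝ) : Phi x ∈ Ioo (0:ℝ) 1 := by
  constructor
  · refine lt_of_le_of_lt ?_ (Phi_strictMono (sub_one_lt x))
    rw [Phi_eq_cdf]; exact cdf_nonneg _ _
  · refine lt_of_lt_of_le (Phi_strictMono (lt_add_one x)) ?_
    rw [Phi_eq_cdf]; exact cdf_le_one _ _

lemma PhiInv_Phi (x : ℝ) : PhiInv (Phi x) = x :=
  Function.leftInverse_invFun Phi_strictMono.injective x

lemma Phi_PhiInv {a : ℝ} (ha : a ∈ Ioo (0:ℝ) 1) : Phi (PhiInv a) = a := by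
  refine Function.invFun_eq ?_
  have h0 : Tendsto Phi atBot (𝓝 0) := by
    rw [funext Phi_eq_cdf]; exact tendsto_cdf_atBot _
  have h1 : Tendsto Phi atTop (𝓝 1) := by
    rw [funext Phi_eq_cdf]; exact tendsto_cdf_atTop _
  exact mem_range_of_exists_le_of_exists_ge Phi_cont
    ((h0.eventually_le_const ha.1).exists) ((h1.eventually_const_le ha.2).exists)

lemma PhiInv_strictMonoOn : StrictMonoOn PhiInv (Ioo (0:ℝ) 1) := by
  intro a ha b hb hab
  rw [← Phi_strictMono.lt_iff_lt, Phi_PhiInv ha, Phi_PhiInv hb]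
  exact hab

lemma PhiInv_deriv {a : ℝ} (ha : a ∈ Ioo (0:ℝ) 1) :
    HasDerivAt PhiInv (gaussI a)⁻¹ a := by
  have hn : Ioo (0:ℝ) 1 ∈ 𝓝 a := isOpen_Ioo.mem_nhds ha
  have hi : PhiInv '' Ioo (0:ℝ) 1 = univ :=
    eq_univ_of_forall fun x => ⟨Phi x, Phi_mem x, PhiInv_Phi x⟩
  refine HasDerivAt.of_local_left_inverse
    (PhiInv_strictMonoOn.continuousAt_of_image_mem_nhds hn (by rw [hi]; exact univ_mem))
    (Phi_deriv _) (gaussPdf_pos _).ne' ?_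
  filter_upwards [hn] with y hy using Phi_PhiInv hy

/-- If `v : [0,∞) → (0,1)` is nondecreasing and for a.e. `r > 0` it is differentiable at `r`
with `v'(r) ≥ c·I(v(r))`, then `Φ⁻¹(v(r)) ≥ Φ⁻¹(v(ρ)) + c(r-ρ)`, i.e.
`v(r) ≥ Φ(Φ⁻¹(v(ρ)) + c(r-ρ))`, for all `0 ≤ ρ ≤ r`. -/
theorem stmt10 (c : ℝ) (hc : 0 < c) (v : ℝ → ℝ)
    (hv01 : ∀ r, 0 ≤ r → v r ∈ Set.Ioo (0 : ℝ) 1)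
    (hmono : MonotoneOn v (Set.Ici (0 : ℝ)))
    (hderiv : ∀ᵐ r ∂(volume.restrict (Set.Ioi (0 : ℝ))),
      DifferentiableAt ℝ v r ∧ c * gaussI (v r) ≤ deriv v r) :
    ∀ ρ r : ℝ, 0 ≤ ρ → ρ ≤ r →
      PhiInv (v ρ) + c * (r - ρ) ≤ PhiInv (v r) ∧
      Phi (PhiInv (v ρ) + c * (r - ρ)) ≤ v r := by
  intro ρ r hρ hr
  have hmain : PhiInv (v ρ) + c * (r - ρ) ≤ PhiInv (v r) := by
    have hsub : uIcc ρ r ⊆ Ici 0 := by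
      rw [uIcc_of_le hr]; exact fun x hx => hρ.trans hx.1
    have hw : MonotoneOn (fun x => PhiInv (v x)) (uIcc ρ r) := fun x hx y hy hxy =>
      PhiInv_strictMonoOn.monotoneOn (hv01 x (hsub hx)) (hv01 y (hsub hy))
        (hmono (hsub hx) (hsub hy) hxy)
    have h1 := hw.intervalIntegral_deriv_mem_uIcc
    have hle : PhiInv (v ρ) ≤ PhiInv (v r) := hw left_mem_uIcc right_mem_uIcc hr
    rw [uIcc_of_le (sub_nonneg.2 hle)] at h1
    have h2 : ∫ _ in ρ..r, c ≤ ∫ x in ρ..r, deriv (fun x => PhiInv (v x)) x := by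
      rw [intervalIntegral.integral_of_le hr, intervalIntegral.integral_of_le hr]
      have hint := hw.intervalIntegrable_deriv
      rw [intervalIntegrable_iff_integrableOn_Ioc_of_le hr] at hint
      refine integral_mono_ae (by simp) hint ?_
      have hd := ae_restrict_of_ae_restrict_of_subset
        (show Ioc ρ r ⊆ Ioi 0 from fun x hx => lt_of_le_of_lt hρ hx.1) hderiv
      filter_upwards [hd, ae_restrict_mem measurableSet_Ioc] with x hx hxm
      have hx0 : 0 ≤ x := hρ.trans hxm.1.le
      have hD : HasDerivAt (fun x => PhiInv (v x)) ((gaussI (v x))⁻¹ * deriv v x) x :=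
        (PhiInv_deriv (hv01 x hx0)).comp x hx.1.hasDerivAt
      have hpos : 0 < gaussI (v x) := gaussPdf_pos _
      rw [hD.deriv, inv_mul_eq_div, le_div_iff₀ hpos]
      exact hx.2
    rw [intervalIntegral.integral_const, smul_eq_mul] at h2
    have := h1.2
    linarith
  refine ⟨hmain, ?_⟩
  have := Phi_strictMono.monotone hmain
  rwa [Phi_PhiInv (hv01 r (hρ.trans hr))] at this
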